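/- Let B = {b_i}_{i≥1} be a set of pairwise coprime positive integers greater than 1 with ∑_i 1/b_i < ∞. Then the set A of B-free numbers (positive integers not divisible by any element of B) has natural density ∏_{i≥1} (1 - 1/b_i), and this density is positive. -/

import Mathlib

open Classical in
noncomputable def cntK (b : ℕ → ℕ) (k x : ℕ) : ℕ :=
  ((Finset.Icc 1 x).filter (fun n => ∀ i, i < k → ¬ b i ∣ n)).card

open Classical in
noncomputable def cntA (b : ℕ → ℕ) (x : ℕ) : ℕ :=
  ((Finset.Icc 1 x).filter (fun n => ∀ i, ¬ b i ∣ n)).card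

theorem cntK_le (b : ℕ → ℕ) (k x : ℕ) : cntK b k x ≤ x := by
  classical
  unfold cntK
  exact (Finset.card_filter_le _ _).trans (by simp)

theorem cntK_succ (b : ℕ → ℕ) (hb : ∀ i, 2 ≤ b i)
    (hcop : ∀ i j, i ≠ j → Nat.Coprime (b i) (b j)) (k x : ℕ) :
    cntK b (k+1) x + cntK b k (x / b k) = cntK b k x := by
  classical
  have hpos : 0 < b k := by have := hb k; omega
  have h1 : cntK b k (x / b k) =
      (((Finset.Icc 1 x).filter (fun n => ∀ i, i < k → ¬ b i ∣ n)).filter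
        (fun n => b k ∣ n)).card := by
    unfold cntK
    refine Finset.card_bij (fun m _ => b k * m) ?_ ?_ ?_
    · intro m hm
      simp only [Finset.mem_filter, Finset.mem_Icc] at hm ⊢
      obtain ⟨⟨h1, h2⟩, h3⟩ := hm
      refine ⟨⟨⟨Nat.mul_pos hpos h1, ?_⟩, ?_⟩, dvd_mul_right _ _⟩
      · rw [Nat.le_div_iff_mul_le hpos] at h2
        linarith [mul_comm m (b k)]
      · intro i hi hd
        exact h3 i hi ((hcop i k (by omega)).dvd_of_dvd_mul_left hd)
    · intro m _ m' _ h
      exact Nat.eq_of_mul_eq_mul_left hpos h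
    · intro n hn
      simp only [Finset.mem_filter, Finset.mem_Icc] at hn
      obtain ⟨⟨⟨h1, h2⟩, h3⟩, m, rfl⟩ := hn
      refine ⟨m, ?_, rfl⟩
      simp only [Finset.mem_filter, Finset.mem_Icc]
      refine ⟨⟨Nat.pos_of_mul_pos_left h1, ?_⟩, fun i hi hd => h3 i hi (hd.mul_left _)⟩
      rw [Nat.le_div_iff_mul_le hpos]
      linarith [mul_comm m (b k)]
  have h2 : cntK b (k+1) x =
      (((Finset.Icc 1 x).filter (fun n => ∀ i, i < k → ¬ b i ∣ n)).filter
        (fun n => ¬ b k ∣ n)).card := by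
    unfold cntK
    rw [Finset.filter_filter]
    congr 1
    ext n
    simp only [Finset.mem_filter, Nat.lt_succ_iff_lt_or_eq]
    grind
  rw [h1, h2, add_comm]
  unfold cntK
  exact Finset.card_filter_add_card_filter_not _

theorem cntK_bound (b : ℕ → ℕ) (hb : ∀ i, 2 ≤ b i)
    (hcop : ∀ i j, i ≠ j → Nat.Coprime (b i) (b j)) (k : ℕ) :
    ∃ C : ℝ, ∀ x : ℕ,
      |(cntK b k x : ℝ) - (∏ i ∈ Finset.range k, (1 - 1 / (b i : ℝ))) * x| ≤ C := by
  induction k with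
  | zero => exact ⟨0, fun x => by simp [cntK]⟩
  | succ k ih =>
    obtain ⟨C, hC⟩ := ih
    set P := ∏ i ∈ Finset.range k, (1 - 1 / (b i : ℝ)) with hP
    refine ⟨C + (C + |P|), fun x => ?_⟩
    have hs : (cntK b (k+1) x : ℝ) + cntK b k (x / b k) = cntK b k x := by
      exact_mod_cast cntK_succ b hb hcop k x
    rw [Finset.prod_range_succ, ← hP]
    have hpos : (0:ℝ) < b k := by have := hb k; exact_mod_cast (by omega : 0 < b k)
    have hfl : |((x / b k : ℕ) : ℝ) - x / b k| ≤ 1 := by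
      rw [← Nat.floor_div_eq_div (K := ℝ)]
      rw [abs_le]
      have h0 : (0:ℝ) ≤ (x:ℝ) / b k := by positivity
      constructor
      · linarith [Nat.lt_floor_add_one ((x:ℝ) / b k)]
      · linarith [Nat.floor_le h0]
    have e : (cntK b (k+1) x : ℝ) - P * (1 - 1 / (b k : ℝ)) * x =
      (cntK b k x - P * x) - ((cntK b k (x / b k) - P * (x / b k : ℕ)) +
        P * (((x / b k : ℕ) : ℝ) - x / b k)) := by
      rw [← hs]; ring
    rw [e]
    refine (abs_sub _ _).trans (add_le_add (hC x) ((abs_add_le _ _).trans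
      (add_le_add (hC _) ?_)))
    rw [abs_mul]
    exact mul_le_of_le_one_right (abs_nonneg _) hfl

theorem cntK_diff (b : ℕ → ℕ) (hb : ∀ i, 2 ≤ b i)
    (hcop : ∀ i j, i ≠ j → Nat.Coprime (b i) (b j)) (k m x : ℕ) :
    (cntK b k x : ℝ) - cntK b (m + k) x ≤
      x * ∑ i ∈ Finset.range m, 1 / (b (i + k) : ℝ) := by
  induction m with
  | zero => simp
  | succ m ih =>
    have hs : (cntK b (m+k+1) x : ℝ) + cntK b (m+k) (x / b (m+k)) = cntK b (m+k) x := by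
      exact_mod_cast cntK_succ b hb hcop (m+k) x
    have h1 : (cntK b (m+k) (x / b (m+k)) : ℝ) ≤ (x:ℝ) / b (m+k) :=
      le_trans (by exact_mod_cast cntK_le b _ _) Nat.cast_div_le
    rw [Finset.sum_range_succ, mul_add, mul_one_div, show m + 1 + k = m + k + 1 by ring]
    linarith

theorem cntA_le (b : ℕ → ℕ) (k x : ℕ) : cntA b x ≤ cntK b k x := by
  classical
  unfold cntA cntK
  apply Finset.card_le_card
  intro n
  simp only [Finset.mem_filter]
  exact fun h => ⟨h.1, fun i _ => h.2 i⟩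

theorem cntA_eq (b : ℕ → ℕ) (hb : ∀ i, 2 ≤ b i)
    (hsum : Summable (fun i => 1 / (b i : ℝ))) (x : ℕ) :
    ∃ M, ∀ m, M ≤ m → cntA b x = cntK b m x := by
  classical
  have ht := hsum.tendsto_atTop_zero
  have hev := ht.eventually (gt_mem_nhds (show (0:ℝ) < 1 / ((x:ℝ) + 1) by positivity))
  obtain ⟨M, hM⟩ := Filter.eventually_atTop.1 hev
  refine ⟨M, fun m hm => ?_⟩
  unfold cntA cntK
  congr 1
  ext n
  simp only [Finset.mem_filter, Finset.mem_Icc]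
  refine ⟨fun h => ⟨h.1, fun i _ => h.2 i⟩, fun h => ⟨h.1, fun i hd => ?_⟩⟩
  by_cases hi : i < m
  · exact h.2 i hi hd
  · have h1 := hM i (by omega)
    have hpos : (0:ℝ) < b i := by have := hb i; exact_mod_cast (by omega : 0 < b i)
    rw [one_div_lt_one_div hpos (by positivity)] at h1
    have h2 : x + 1 < b i := by exact_mod_cast h1
    have := Nat.le_of_dvd (by omega) hd
    omega

theorem cntA_diff (b : ℕ → ℕ) (hb : ∀ i, 2 ≤ b i)
    (hcop : ∀ i j, i ≠ j → Nat.Coprime (b i) (b j))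
    (hsum : Summable (fun i => 1 / (b i : ℝ))) (k x : ℕ) :
    (cntK b k x : ℝ) - cntA b x ≤ x * ∑' i, 1 / (b (i + k) : ℝ) := by
  obtain ⟨M, hM⟩ := cntA_eq b hb hsum x
  rw [hM (M + k) (by omega)]
  refine (cntK_diff b hb hcop k M x).trans ?_
  refine mul_le_mul_of_nonneg_left ?_ (by positivity)
  exact Summable.sum_le_tsum _ (fun i _ => by positivity)
    ((summable_nat_add_iff (f := fun i => 1 / (b i : ℝ)) k).2 hsum)

open Classical in
theorem erdos_Bfree_density (b : ℕ → ℕ) (hb : ∀ i, 2 ≤ b i)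
    (hcop : ∀ i j, i ≠ j → Nat.Coprime (b i) (b j))
    (hsum : Summable (fun i => 1 / (b i : ℝ))) :
    Filter.Tendsto (fun x : ℕ =>
        (((Finset.Icc 1 x).filter (fun n => ∀ i, ¬ b i ∣ n)).card : ℝ) / (x : ℝ))
      Filter.atTop (nhds (∏' i, (1 - 1 / (b i : ℝ)))) ∧
    0 < ∏' i, (1 - 1 / (b i : ℝ)) := by
  have hpos : ∀ i, 0 < 1 - 1 / (b i : ℝ) := by
    intro i
    have h2 : (2:ℝ) ≤ b i := by exact_mod_cast hb i
    have : 1 / (b i : ℝ) < 1 := by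
      rw [div_lt_one (by linarith)]; linarith
    linarith
  have hlog : Summable (fun i => Real.log (1 - 1 / (b i : ℝ))) := by
    have := Real.summable_log_one_add_of_summable hsum.neg
    simpa [sub_eq_add_neg] using this
  have hmul : Multipliable (fun i => 1 - 1 / (b i : ℝ)) :=
    Real.multipliable_of_summable_log hpos hlog
  refine ⟨?_, ?_⟩
  · change Filter.Tendsto (fun x : ℕ => (cntA b x : ℝ) / (x : ℝ)) _ _
    have hP := hmul.hasProd.tendsto_prod_nat
    set P := ∏' i, (1 - 1 / (b i : ℝ))
    have hT := tendsto_sum_nat_add (fun i => 1 / (b i : ℝ))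
    rw [Metric.tendsto_atTop]
    intro ε hε
    have e1 := (Metric.tendsto_nhds.1 hP) (ε/4) (by positivity)
    have e2 := hT.eventually (gt_mem_nhds (show (0:ℝ) < ε/4 by positivity))
    obtain ⟨k, hk1, hk2⟩ := (e1.and e2).exists
    obtain ⟨C, hC⟩ := cntK_bound b hb hcop k
    rw [Real.dist_eq] at hk1
    set Q := ∏ i ∈ Finset.range k, (1 - 1 / (b i : ℝ))
    set T := ∑' i, 1 / (b (i + k) : ℝ)
    obtain ⟨N, hN⟩ := exists_nat_gt (C / (ε/4))
    refine ⟨N + 1, fun x hx => ?_⟩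
    have hx0 : (0:ℝ) < x := by exact_mod_cast (by omega : 0 < x)
    have hxC : C ≤ ε/4 * x := by
      rw [div_lt_iff₀ (by positivity)] at hN
      have : (N:ℝ) ≤ x := by exact_mod_cast (by omega : N ≤ x)
      nlinarith
    have hA1 : (cntA b x : ℝ) ≤ cntK b k x := by exact_mod_cast cntA_le b k x
    have hA2 := cntA_diff b hb hcop hsum k x
    change _ ≤ (x:ℝ) * T at hA2
    have hK := abs_le.1 (hC x)
    have hQ := abs_lt.1 hk1
    rw [Real.dist_eq, abs_lt]
    constructor
    · rw [lt_sub_iff_add_lt, lt_div_iff₀ hx0]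
      nlinarith
    · rw [sub_lt_iff_lt_add, div_lt_iff₀ hx0]
      nlinarith
  · rw [← Real.rexp_tsum_eq_tprod hpos hlog]
    exact Real.exp_pos _
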